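/- For any cycle graph C_k with k ≥ 6 and single-peaked preferences, there is no false-name-proof and Pareto efficient deterministic social choice function. -/

import Mathlib

/-!
Suppose `f` is false-name-proof and Pareto efficient on `C_k`, and let `c` be its outcome when every
vertex is reported exactly once. Any agent in a profile without repetitions can produce that full
profile by adding fake reports, so every agent weakly prefers the actual outcome to `c`. By rotation
we may take `c = 0` (`exists_normalized`). If two (nearly) antipodal agents are both at least as
close to the outcome as to `0`, few vertices remain, and Pareto efficiency may rule out `0` itself.
The profiles whose outcome is pinned down in this way contradict each other.

* `k = 2m`: the profile `{1, 2, m+1}` forces the outcome `2`, the reflection of `0` in the axis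
  through `1` and `m + 1`; similarly `{2, m+1, m+2}` forces `4`. At `{2, m+1}` either agent may add a
  fake report to reach one of these profiles, so the outcome is at distance `0` from `2` and at most
  `m - 3` from `m + 1`, although these vertices are `m - 1` apart.
* `k = 2m + 1`, `m ≥ 4`: the profile `{2, m+2}` forces an outcome in `{3, 4}` and `{3, m+3}` one in
  `{5, 6}`. At `{3, m+2}` misreporting then puts the outcome within `1` of `3` and within `m - 3` of
  `m + 2`, although these vertices are `m - 1` apart.
* `k = 7`: the profile `{2, 5}` forces an outcome in `{3, 4}`; the outcome `4` is incompatible with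
  the profiles `{2, 4}` and `{1, 4}`, and `3` with `{3, 5}` and `{3, 6}`.
-/

namespace FNPFL

variable {V : Type*}

/-- Single-peaked Pareto domination: `v` dominates `w` under profile `θ`
(agents prefer smaller distance). -/
def Dom (d : V → V → ℕ) (θ : Multiset V) (v w : V) : Prop :=
  (∀ i ∈ θ, d i v ≤ d i w) ∧ ∃ i ∈ θ, d i v < d i w

/-- `w` is Pareto efficient under `θ` (single-peaked). -/
def IsPE (d : V → V → ℕ) (θ : Multiset V) (w : V) : Prop :=
  ∀ v, ¬ Dom d θ v w

/-- A social choice function is Pareto efficient (single-peaked). -/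
def ParetoEfficient (d : V → V → ℕ) (f : Multiset V → V) : Prop :=
  ∀ θ : Multiset V, θ ≠ 0 → IsPE d θ (f θ)

/-- False-name-proofness (single-peaked): an agent `i ∈ θ` replaces her report by
any nonempty multiset `fake` of reports (a misreport plus possibly extra fake
identities) and cannot obtain an outcome strictly closer to her true location. -/
def FalseNameProof [DecidableEq V] (d : V → V → ℕ) (f : Multiset V → V) : Prop :=
  ∀ θ : Multiset V, ∀ i ∈ θ, ∀ fake : Multiset V, fake ≠ 0 →
    d i (f θ) ≤ d i (f (θ.erase i + fake))

/-- Truthfulness (single-peaked): no agent benefits by a single misreport. -/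
def Truthful [DecidableEq V] (d : V → V → ℕ) (f : Multiset V → V) : Prop :=
  ∀ θ : Multiset V, ∀ i ∈ θ, ∀ x : V,
    d i (f θ) ≤ d i (f (θ.erase i + {x}))

/-- `f` is the sequential Pareto rule with ordering `σ` (single-peaked):
on every nonempty profile it outputs the first Pareto efficient vertex in `σ`. -/
def SeqParetoRule (d : V → V → ℕ) (σ : List V) (f : Multiset V → V) : Prop :=
  ∀ θ : Multiset V, θ ≠ 0 →
    ∃ l₁ l₂, σ = l₁ ++ f θ :: l₂ ∧ IsPE d θ (f θ) ∧ ∀ u ∈ l₁, ¬ IsPE d θ u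

/-- Single-dipped Pareto domination: `v` dominates `w` under `θ`
(agents prefer larger distance). -/
def DomD (d : V → V → ℕ) (θ : Multiset V) (v w : V) : Prop :=
  (∀ i ∈ θ, d i w ≤ d i v) ∧ ∃ i ∈ θ, d i w < d i v

/-- `w` is Pareto efficient under `θ` (single-dipped). -/
def IsPED (d : V → V → ℕ) (θ : Multiset V) (w : V) : Prop :=
  ∀ v, ¬ DomD d θ v w

/-- Pareto efficiency of an SCF (single-dipped). -/
def ParetoEfficientD (d : V → V → ℕ) (f : Multiset V → V) : Prop :=
  ∀ θ : Multiset V, θ ≠ 0 → IsPED d θ (f θ)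

/-- False-name-proofness (single-dipped): no agent can obtain an outcome strictly
farther from her true location by misreporting and/or adding fake identities. -/
def FalseNameProofD [DecidableEq V] (d : V → V → ℕ) (f : Multiset V → V) : Prop :=
  ∀ θ : Multiset V, ∀ i ∈ θ, ∀ fake : Multiset V, fake ≠ 0 →
    d i (f (θ.erase i + fake)) ≤ d i (f θ)

/-- Sequential Pareto rule with ordering `σ` (single-dipped). -/
def SeqParetoRuleD (d : V → V → ℕ) (σ : List V) (f : Multiset V → V) : Prop :=
  ∀ θ : Multiset V, θ ≠ 0 →
    ∃ l₁ l₂, σ = l₁ ++ f θ :: l₂ ∧ IsPED d θ (f θ) ∧ ∀ u ∈ l₁, ¬ IsPED d θ u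

/-- Graph distance on the cycle `C_k` with vertices `ZMod k`. -/
def cycleDist (k : ℕ) (v w : ZMod k) : ℕ := min (v - w).val (w - v).val

/-- Manhattan (= graph) distance on a 2-dimensional grid. -/
def gridDist {l m : ℕ} (u v : Fin l × Fin m) : ℕ :=
  Nat.dist u.1.val v.1.val + Nat.dist u.2.val v.2.val

end FNPFL

open FNPFL

/-! ### Distances and normalization -/

/-- The distance on `C_k` between the vertices with representatives `a, b < k`. The sum of the two
truncated differences is `|a - b|`. -/
def natDist (k a b : ℕ) : ℕ := min (a - b + (b - a)) (k - (a - b + (b - a)))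

lemma cycleDist_comm (k : ℕ) (v w : ZMod k) : cycleDist k v w = cycleDist k w v := by
  unfold cycleDist
  exact min_comm _ _

lemma cycleDist_natCast {k a b : ℕ} (ha : a < k) (hb : b < k) :
    cycleDist k (a : ZMod k) (b : ZMod k) = natDist k a b := by
  wlog hab : a ≤ b generalizing a b
  · rw [cycleDist_comm, this hb ha (by omega)]
    unfold natDist
    rw [add_comm]
  have : NeZero k := ⟨by omega⟩
  have h1 : ((b : ZMod k) - a).val = b - a := by
    rw [← Nat.cast_sub hab, ZMod.val_natCast_of_lt (by omega)]
  have h2 : ((a : ZMod k) - b).val = if b - a = 0 then 0 else k - (b - a) := by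
    rw [← neg_sub, ZMod.neg_val, h1]
    have : (b : ZMod k) - a = 0 ↔ b - a = 0 := by
      rw [← ZMod.val_eq_zero, h1]
    simp only [this]
  unfold cycleDist natDist
  rw [h1, h2]
  split_ifs <;> omega

/-- Every agent can turn her profile into the one listing each vertex once, so no agent is worse off
than there. Rotating the cycle places the outcome of that full profile at `0`. -/
lemma exists_normalized {k : ℕ} [NeZero k] {f : Multiset (ZMod k) → ZMod k}
    (hF : FalseNameProof (cycleDist k) f) (hP : ParetoEfficient (cycleDist k) f) :
    ∃ g : Multiset (ZMod k) → ZMod k,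
      FalseNameProof (cycleDist k) g ∧ ParetoEfficient (cycleDist k) g ∧
      ∀ θ : Multiset (ZMod k), θ.Nodup → ∀ i ∈ θ,
        cycleDist k i (g θ) ≤ cycleDist k i 0 := by
  set c := f Finset.univ.val with hc
  have hinj : Function.Injective (fun x : ZMod k => x + c) := add_left_injective c
  have hd (a b : ZMod k) : cycleDist k a (b - c) = cycleDist k (a + c) b := by
    unfold cycleDist
    congr 2 <;> ring
  have hd' (a b : ZMod k) : cycleDist k a b = cycleDist k (a + c) (b + c) := by
    unfold cycleDist
    congr 2 <;> ring
  refine ⟨fun θ => f (θ.map (· + c)) - c, ?_, ?_, ?_⟩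
  · intro θ i hi fake hfake
    simp only [hd]
    have := hF (θ.map (· + c)) (i + c) (Multiset.mem_map_of_mem _ hi) (fake.map (· + c))
      (by simpa using hfake)
    rwa [← Multiset.map_erase _ hinj, ← Multiset.map_add] at this
  · intro θ hθ v hv
    refine hP (θ.map (· + c)) (by simpa using hθ) (v + c) ⟨?_, ?_⟩
    · intro j hj
      obtain ⟨i, hi, rfl⟩ := Multiset.mem_map.1 hj
      have := hv.1 i hi
      rwa [hd, hd'] at this
    · obtain ⟨i, hi, hlt⟩ := hv.2
      refine ⟨i + c, Multiset.mem_map_of_mem _ hi, ?_⟩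
      rwa [hd, hd'] at hlt
  · intro θ hθ i hi
    rw [hd, hd' i 0, zero_add, hc]
    set η := θ.map (· + c)
    have hη : η.Nodup := hθ.map hinj
    have hle : η.erase (i + c) ≤ Finset.univ.val :=
      (Multiset.le_iff_subset (hη.erase _)).2 fun x _ => Finset.mem_univ_val x
    have hfake : Finset.univ.val - η.erase (i + c) ≠ 0 := by
      intro h0
      have hmem := Multiset.mem_of_le (tsub_eq_zero_iff_le.1 h0) (Finset.mem_univ_val (i + c))
      exact hη.notMem_erase hmem
    have := hF η (i + c) (Multiset.mem_map_of_mem _ hi) _ hfake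
    rwa [add_tsub_cancel_of_le hle] at this

/-! ### Outcomes and deviations at small profiles -/

section

variable {k : ℕ} {g : Multiset (ZMod k) → ZMod k}

lemma natCast_ne {a b : ℕ} (ha : a < k) (hb : b < k) (hab : a ≠ b) :
    (a : ZMod k) ≠ b := by
  intro h
  have := congrArg ZMod.val h
  rw [ZMod.val_natCast_of_lt ha, ZMod.val_natCast_of_lt hb] at this
  exact hab this

/-- Individual rationality against `0` and Pareto efficiency for a two-agent profile, in terms of
the representatives `a`, `b` and the representative `n` of the outcome. -/
lemma outcome_pair [NeZero k] (hP : ParetoEfficient (cycleDist k) g)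
    (h0 : ∀ θ : Multiset (ZMod k), θ.Nodup → ∀ i ∈ θ,
      cycleDist k i (g θ) ≤ cycleDist k i 0)
    (a b : ℕ) (ha : a < k) (hb : b < k) (hab : a ≠ b) :
    ∃ n < k, g {(a : ZMod k), (b : ZMod k)} = n ∧
      natDist k a n ≤ natDist k a 0 ∧ natDist k b n ≤ natDist k b 0 ∧
      ∀ v < k, natDist k a v ≤ natDist k a n → natDist k b v ≤ natDist k b n →
        natDist k a n ≤ natDist k a v ∧ natDist k b n ≤ natDist k b v := by
  have hk : 0 < k := NeZero.pos k
  set θ : Multiset (ZMod k) := {(a : ZMod k), (b : ZMod k)} with hθ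
  have hn : (g θ).val < k := ZMod.val_lt _
  have hg : g θ = ((g θ).val : ZMod k) := (ZMod.natCast_zmod_val _).symm
  have hnd : θ.Nodup := by simp [hθ, natCast_ne ha hb hab]
  have hPE := hP θ (by simp [hθ])
  have hir := h0 θ hnd
  generalize (g θ).val = n at *
  rw [hg] at hPE hir
  simp only [hθ, Multiset.insert_eq_cons, Multiset.mem_cons, Multiset.mem_singleton,
    forall_eq_or_imp, forall_eq] at hir
  rw [← Nat.cast_zero, cycleDist_natCast ha hn, cycleDist_natCast ha hk,
    cycleDist_natCast hb hn, cycleDist_natCast hb hk] at hir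
  refine ⟨n, hn, hg, hir.1, hir.2, fun v hv h1 h2 => ?_⟩
  have := hPE v
  simp only [Dom, hθ, Multiset.insert_eq_cons, Multiset.mem_cons, Multiset.mem_singleton,
    forall_eq_or_imp, forall_eq, exists_eq_or_imp, exists_eq_left,
    cycleDist_natCast ha hn, cycleDist_natCast ha hv,
    cycleDist_natCast hb hn, cycleDist_natCast hb hv] at this
  omega

/-- The analogue of `outcome_pair` for three agents. -/
lemma outcome_triple [NeZero k] (hP : ParetoEfficient (cycleDist k) g)
    (h0 : ∀ θ : Multiset (ZMod k), θ.Nodup → ∀ i ∈ θ,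
      cycleDist k i (g θ) ≤ cycleDist k i 0)
    (a b c : ℕ) (ha : a < k) (hb : b < k) (hc : c < k)
    (hab : a ≠ b) (hac : a ≠ c) (hbc : b ≠ c) :
    ∃ n < k, g {(a : ZMod k), (b : ZMod k), (c : ZMod k)} = n ∧
      natDist k a n ≤ natDist k a 0 ∧ natDist k b n ≤ natDist k b 0 ∧
      natDist k c n ≤ natDist k c 0 ∧
      ∀ v < k, natDist k a v ≤ natDist k a n → natDist k b v ≤ natDist k b n →
        natDist k c v ≤ natDist k c n →
        natDist k a n ≤ natDist k a v ∧ natDist k b n ≤ natDist k b v ∧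
          natDist k c n ≤ natDist k c v := by
  have hk : 0 < k := NeZero.pos k
  set θ : Multiset (ZMod k) := {(a : ZMod k), (b : ZMod k), (c : ZMod k)} with hθ
  have hn : (g θ).val < k := ZMod.val_lt _
  have hg : g θ = ((g θ).val : ZMod k) := (ZMod.natCast_zmod_val _).symm
  have hnd : θ.Nodup := by
    simp [hθ, natCast_ne ha hb hab, natCast_ne ha hc hac, natCast_ne hb hc hbc]
  have hPE := hP θ (by simp [hθ])
  have hir := h0 θ hnd
  generalize (g θ).val = n at *
  rw [hg] at hPE hir
  simp only [hθ, Multiset.insert_eq_cons, Multiset.mem_cons, Multiset.mem_singleton,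
    forall_eq_or_imp, forall_eq] at hir
  rw [← Nat.cast_zero, cycleDist_natCast ha hn, cycleDist_natCast ha hk,
    cycleDist_natCast hb hn, cycleDist_natCast hb hk,
    cycleDist_natCast hc hn, cycleDist_natCast hc hk] at hir
  refine ⟨n, hn, hg, hir.1, hir.2.1, hir.2.2, fun v hv h1 h2 h3 => ?_⟩
  have := hPE v
  simp only [Dom, hθ, Multiset.insert_eq_cons, Multiset.mem_cons, Multiset.mem_singleton,
    forall_eq_or_imp, forall_eq, exists_eq_or_imp, exists_eq_left,
    cycleDist_natCast ha hn, cycleDist_natCast ha hv,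
    cycleDist_natCast hb hn, cycleDist_natCast hb hv,
    cycleDist_natCast hc hn, cycleDist_natCast hc hv] at this
  omega

/-- The first of two agents cannot gain by misreporting. -/
lemma misreport_left (hF : FalseNameProof (cycleDist k) g) {a b x n n' : ℕ}
    (ha : a < k) (hn : n < k) (hn' : n' < k)
    (h : g {(a : ZMod k), (b : ZMod k)} = n) (h' : g {(x : ZMod k), (b : ZMod k)} = n') :
    natDist k a n ≤ natDist k a n' := by
  have := hF {(a : ZMod k), (b : ZMod k)} a (by simp) {(x : ZMod k)} (by simp)
  have e : ({(a : ZMod k), (b : ZMod k)} : Multiset (ZMod k)).erase a + {(x : ZMod k)}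
      = {(x : ZMod k), (b : ZMod k)} := by
    rw [Multiset.insert_eq_cons, Multiset.erase_cons_head, add_comm, Multiset.singleton_add]
    rfl
  rwa [e, h, h', cycleDist_natCast ha hn, cycleDist_natCast ha hn'] at this

/-- The second of two agents cannot gain by misreporting. -/
lemma misreport_right (hF : FalseNameProof (cycleDist k) g) {a b x n n' : ℕ}
    (hb : b < k) (hn : n < k) (hn' : n' < k)
    (h : g {(a : ZMod k), (b : ZMod k)} = n) (h' : g {(a : ZMod k), (x : ZMod k)} = n') :
    natDist k b n ≤ natDist k b n' := by
  rw [Multiset.pair_comm] at h h'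
  exact misreport_left hF hb hn hn' h h'

/-- No agent can gain by adding one fake report. -/
lemma add_fake (hF : FalseNameProof (cycleDist k) g) {a x n n' : ℕ}
    {θ : Multiset (ZMod k)} (hi : (a : ZMod k) ∈ θ) (ha : a < k) (hn : n < k) (hn' : n' < k)
    (h : g θ = n) (h' : g ((x : ZMod k) ::ₘ θ) = n') :
    natDist k a n ≤ natDist k a n' := by
  have := hF θ a hi {(a : ZMod k), (x : ZMod k)} (by simp)
  have e : θ.erase (a : ZMod k) + {(a : ZMod k), (x : ZMod k)} = (x : ZMod k) ::ₘ θ := by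
    rw [Multiset.insert_eq_cons, Multiset.add_cons, ← Multiset.cons_add, Multiset.cons_erase hi,
      add_comm, Multiset.singleton_add]
  rwa [e, h, h', cycleDist_natCast ha hn, cycleDist_natCast ha hn'] at this

end

/-! ### The contradictory profiles -/

lemma even_case {m : ℕ} (hm : 3 ≤ m) [NeZero (2 * m)]
    {g : Multiset (ZMod (2 * m)) → ZMod (2 * m)}
    (hF : FalseNameProof (cycleDist (2 * m)) g) (hP : ParetoEfficient (cycleDist (2 * m)) g)
    (h0 : ∀ θ : Multiset (ZMod (2 * m)), θ.Nodup → ∀ i ∈ θ,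
      cycleDist (2 * m) i (g θ) ≤ cycleDist (2 * m) i 0) : False := by
  obtain ⟨p, hp, hgp, p1, p2, p3, p4⟩ := outcome_triple hP h0 1 2 (m + 1)
    (by omega) (by omega) (by omega) (by omega) (by omega) (by omega)
  obtain ⟨q, hq, hgq, q1, q2, q3, q4⟩ := outcome_triple hP h0 (m + 2) 2 (m + 1)
    (by omega) (by omega) (by omega) (by omega) (by omega) (by omega)
  obtain ⟨r, hr, hgr, -⟩ := outcome_pair hP h0 2 (m + 1) (by omega) (by omega) (by omega)
  have e1 := add_fake hF (a := 2) (by simp) (by omega) hr hp hgr hgp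
  have e2 := add_fake hF (a := m + 1) (by simp) (by omega) hr hq hgr hgq
  have hp' : p = 2 := by
    have : p = 0 ∨ p = 2 := by
      unfold natDist at p1 p3
      omega
    -- Vertex `2` dominates `0`.
    rcases this with rfl | rfl
    · specialize p4 2 (by omega)
      unfold natDist at p4
      omega
    · rfl
  have hq' : natDist (2 * m) (m + 1) q ≤ m - 3 := by
    have h4 : q ≤ 4 := by
      unfold natDist at q2
      omega
    have : q = 0 ∨ q = 4 := by
      unfold natDist at q1
      omega
    -- Vertex `4` dominates `0`.
    rcases this with rfl | rfl
    · specialize q4 4 (by omega)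
      unfold natDist at q4
      omega
    · unfold natDist
      omega
  subst hp'
  have hr' : r = 2 := by
    unfold natDist at e1
    omega
  subst hr'
  replace e2 := e2.trans hq'
  unfold natDist at e2
  omega

lemma odd_case {m : ℕ} (hm : 4 ≤ m) [NeZero (2 * m + 1)]
    {g : Multiset (ZMod (2 * m + 1)) → ZMod (2 * m + 1)}
    (hF : FalseNameProof (cycleDist (2 * m + 1)) g)
    (hP : ParetoEfficient (cycleDist (2 * m + 1)) g)
    (h0 : ∀ θ : Multiset (ZMod (2 * m + 1)), θ.Nodup → ∀ i ∈ θ,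
      cycleDist (2 * m + 1) i (g θ) ≤ cycleDist (2 * m + 1) i 0) : False := by
  obtain ⟨p, hp, hgp, p1, p2, p3⟩ := outcome_pair hP h0 2 (m + 2)
    (by omega) (by omega) (by omega)
  obtain ⟨q, hq, hgq, q1, q2, q3⟩ := outcome_pair hP h0 3 (m + 3)
    (by omega) (by omega) (by omega)
  obtain ⟨r, hr, hgr, -⟩ := outcome_pair hP h0 3 (m + 2) (by omega) (by omega) (by omega)
  have e1 := misreport_left hF (by omega) hr hp hgr hgp
  have e2 := misreport_right hF (by omega) hr hq hgr hgq
  have hp' : natDist (2 * m + 1) 3 p ≤ 1 := by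
    have h4 : p ≤ 4 := by
      unfold natDist at p1
      omega
    have : p = 0 ∨ p = 3 ∨ p = 4 := by
      unfold natDist at p2
      omega
    -- Vertex `3` dominates `0`.
    rcases this with rfl | rfl | rfl
    · specialize p3 3 (by omega)
      unfold natDist at p3
      omega
    all_goals
      unfold natDist
      omega
  have hq' : natDist (2 * m + 1) (m + 2) q ≤ m - 3 := by
    have h6 : q ≤ 6 := by
      unfold natDist at q1
      omega
    have : q = 0 ∨ q = 5 ∨ q = 6 := by
      unfold natDist at q2
      omega
    -- Vertex `5` dominates `0`.
    rcases this with rfl | rfl | rfl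
    · specialize q3 5 (by omega)
      unfold natDist at q3
      omega
    all_goals
      unfold natDist
      omega
  replace e1 := e1.trans hp'
  replace e2 := e2.trans hq'
  have hr' : 2 ≤ r ∧ r ≤ 4 := by
    unfold natDist at e1
    omega
  unfold natDist at e2
  omega

lemma seven_case {g : Multiset (ZMod 7) → ZMod 7}
    (hF : FalseNameProof (cycleDist 7) g) (hP : ParetoEfficient (cycleDist 7) g)
    (h0 : ∀ θ : Multiset (ZMod 7), θ.Nodup → ∀ i ∈ θ,
      cycleDist 7 i (g θ) ≤ cycleDist 7 i 0) : False := by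
  have key := fun a b ha hb hab => outcome_pair hP h0 a b ha hb hab
  obtain ⟨p, hp, hgp, p1, p2, p3⟩ := key 2 5 (by omega) (by omega) (by omega)
  have hp' : p = 3 ∨ p = 4 := by
    specialize p3 3 (by omega)
    unfold natDist at p1 p2 p3
    omega
  rcases hp' with rfl | rfl
  · obtain ⟨q, hq, hgq, q1, q2, q3⟩ := key 3 6 (by omega) (by omega) (by omega)
    obtain ⟨r, hr, hgr, -⟩ := key 3 5 (by omega) (by omega) (by omega)
    have e1 := misreport_left hF (by omega) hr hp hgr hgp
    have e2 := misreport_right hF (by omega) hr hq hgr hgq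
    -- Vertex `6` dominates `0` at `{3, 6}`, which leaves only the outcomes `5` and `6`.
    specialize q3 6 (by omega)
    unfold natDist at q1 q2 q3 e1 e2
    omega
  · obtain ⟨q, hq, hgq, q1, q2, q3⟩ := key 1 4 (by omega) (by omega) (by omega)
    obtain ⟨r, hr, hgr, -⟩ := key 2 4 (by omega) (by omega) (by omega)
    have e1 := misreport_right hF (by omega) hr hp hgr hgp
    have e2 := misreport_left hF (by omega) hr hq hgr hgq
    -- Vertex `1` dominates `0` at `{1, 4}`, which leaves only the outcomes `1` and `2`.
    specialize q3 1 (by omega)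
    unfold natDist at q1 q2 q3 e1 e2
    omega

/-- for every cycle `C_k` with `k ≥ 6` and single-peaked preferences
there is no false-name-proof and Pareto efficient deterministic SCF. -/
theorem stmt7 (k : ℕ) (hk : 6 ≤ k) :
    ¬ ∃ f : Multiset (ZMod k) → ZMod k,
      FalseNameProof (cycleDist k) f ∧ ParetoEfficient (cycleDist k) f := by
  rintro ⟨f, hF, hP⟩
  have : NeZero k := ⟨by omega⟩
  obtain ⟨g, gF, gP, g0⟩ := exists_normalized hF hP
  obtain ⟨m, rfl | rfl⟩ := Nat.even_or_odd' k
  · exact even_case (by omega) gF gP g0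
  · obtain rfl | hm : m = 3 ∨ 4 ≤ m := by omega
    · exact seven_case gF gP g0
    · exact odd_case hm gF gP g0
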